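/- Fix T > 0, t ∈ [0,T), s > 0, S₀ > 0 and g ∈ ℝ. With κ, η, Λ and the payoff data as defined, let H(λ; u, x) := ∫_ℝ x^{z_y}·e^{η(λ,z_y)(T−u)}·p(z_y) dy and χ(λ) := (Λ(λ)/s)·(H(λ; t, s) − H(λ; 0, S₀) − g) for λ ∈ [0,1]. Then λ ↦ χ(λ) is twice continuously differentiable on [0,1], with: χ(0) = (Λ(0)/s)·(C(t,s) − C(0,S₀) − g); χ'(0) = (Λ'(0)/s)·(C(t,s) − C(0,S₀) − g) + (Λ(0)/s)·(∂_λH(0; t, s) − ∂_λH(0; 0, S₀)); and χ''(0) = (Λ''(0)/s)·(C(t,s) − C(0,S₀) − g) + 2(Λ'(0)/s)·(∂_λH(0; t, s) − ∂_λH(0; 0, S₀)) + (Λ(0)/s)·(∂²_λH(0; t, s) − ∂²_λH(0; 0, S₀)), where C is the Black–Scholes price function, Λ(λ) := κ(λ,1)/(κ(λ,2) − 2κ(λ,1)), and ∂_λH, ∂²_λH denote the first and second partial derivatives of H in λ. -/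

import Mathlib

open MeasureTheory Complex Set

/-- Cumulant generating function `κ(λ, z)` of the interpolating family. -/
noncomputable def kappa (μ c : ℝ) (K : Measure ℝ) (lam : ℝ) (z : ℂ) : ℂ :=
  if lam = 0 then (μ : ℂ) * z + (((c + ∫ x : ℝ, x ^ 2 ∂K) : ℝ) : ℂ) / 2 * z ^ 2
  else (μ : ℂ) * z + (c : ℂ) / 2 * z ^ 2 +
    ((lam : ℂ) ^ 2)⁻¹ *
      ∫ x : ℝ, (Complex.exp ((lam : ℂ) * z * (x : ℂ)) - 1 - (lam : ℂ) * z * (x : ℂ)) ∂K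

noncomputable def kbar (μ c : ℝ) (K : Measure ℝ) (lam : ℝ) (y z : ℂ) : ℂ :=
  kappa μ c K lam (y + z) - kappa μ c K lam y - kappa μ c K lam z

noncomputable def gamLK (μ c : ℝ) (K : Measure ℝ) (lam : ℝ) (z : ℂ) : ℂ :=
  kbar μ c K lam z 1 / kbar μ c K lam 1 1

noncomputable def etaLK (μ c : ℝ) (K : Measure ℝ) (lam : ℝ) (z : ℂ) : ℂ :=
  kappa μ c K lam z - kappa μ c K lam 1 * gamLK μ c K lam z

noncomputable def cpowR (s : ℝ) (z : ℂ) : ℂ := Complex.exp (z * Real.log s)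

noncomputable def zLine (R y : ℝ) : ℂ := (R : ℂ) + (y : ℂ) * Complex.I

/-- Fourier transform `l̂(y) = ∫ l(x) e^{-ixy} dx`. -/
noncomputable def lhat (l : ℝ → ℝ) (y : ℝ) : ℂ :=
  ∫ x : ℝ, (l x : ℂ) * Complex.exp (-(Complex.I * (x : ℂ) * (y : ℂ)))

noncomputable def pCoef (l : ℝ → ℝ) (y : ℝ) : ℂ := lhat l y / (2 * (Real.pi : ℂ))

/-- Black-Scholes cash greek `D_n(t,s)` in integral form (with `C = D_0`). -/
noncomputable def cashGreek (σ2 T R : ℝ) (l : ℝ → ℝ) (n : ℕ) (t s : ℝ) : ℂ :=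
  ∫ y : ℝ, (∏ k ∈ Finset.range n, (zLine R y - (k : ℂ))) * cpowR s (zLine R y) *
    Complex.exp (((σ2 : ℂ) / 2) * zLine R y * (zLine R y - 1) * ((T : ℂ) - (t : ℂ))) * pCoef l y

/-- The mean-variance ratio `Λ(λ) = κ(λ,1) / (κ(λ,2) − 2κ(λ,1))`. -/
noncomputable def LamMV (μ c : ℝ) (K : Measure ℝ) (lam : ℝ) : ℂ :=
  kappa μ c K lam 1 / (kappa μ c K lam 2 - 2 * kappa μ c K lam 1)

/-! Against the finite measure `G = c δ₀ + x² K`, the function `κ(λ, z) - μ z` is the integral of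
`(e^{zu} - 1 - zu) / u²` at `u = λx`. Two consequences drive the argument.

* `κ̄(y, z)` is the integral of a product of kernels `(e^{yu} - 1) / u` and `(e^{zu} - 1) / u`, so
  `(y, z) ↦ κ̄(y, conj z)` is positive semidefinite. Young's inequality then absorbs the hedging
  term `Λ κ̄(z, 1)` of `η` into `κ̄(z, conj z) = κ(2 Re z) - 2 Re κ(z)`, which bounds `Re η(λ, z)`
  above by a function of `λ` and `Re z` alone. Hence `exp (η τ)` is bounded on the vertical line
  `Re z = R`, locally uniformly in `λ`.
* `κ(λ, z) = μ z + z² Φ(λ z)` with `Φ` a moment generating function, holomorphic and bounded with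
  all its derivatives on vertical strips, so the `λ`-derivatives of `η(λ, R + iy)` grow at most
  polynomially in `y`, through `λ = 0`.

Since `l̂` decays faster than every power, `H` may be differentiated in `λ` under the integral sign,
and the derivatives of `χ` follow from the Leibniz rule. At `λ = 0` the exponent is
`η(0, z) = σ² z (z - 1) / 2`, that of the Black–Scholes price.
-/

section

open Asymptotics Filter Function ProbabilityTheory Topology

section ExpKernels

/-- The kernel `(e^{zu} - 1 - zu) / u²` of the Kolmogorov form of a cumulant generating function,
extended continuously to `u = 0`. -/
noncomputable def expRemainder (z : ℂ) (u : ℝ) : ℂ :=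
  if u = 0 then z ^ 2 / 2 else (cexp (z * u) - 1 - z * u) / (u : ℂ) ^ 2

/-- The kernel `(e^{zu} - 1) / u`, extended continuously to `u = 0`; products of two such kernels
represent the covariance form `kbar`. -/
noncomputable def expSlope (z : ℂ) (u : ℝ) : ℂ :=
  if u = 0 then z else (cexp (z * u) - 1) / u

lemma expSlope_mul_expSlope (y z : ℂ) (u : ℝ) :
    expSlope y u * expSlope z u =
      expRemainder (y + z) u - expRemainder y u - expRemainder z u := by
  by_cases hu : u = 0
  · simp only [expSlope, expRemainder, if_pos hu]
    ring
  · have hu' : (u : ℂ) ≠ 0 := by exact_mod_cast hu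
    simp only [expSlope, expRemainder, if_neg hu, add_mul, Complex.exp_add]
    field_simp
    ring

lemma expSlope_conj (z : ℂ) (u : ℝ) :
    expSlope (starRingEnd ℂ z) u = starRingEnd ℂ (expSlope z u) := by
  by_cases hu : u = 0 <;> simp [expSlope, hu, ← Complex.exp_conj]

lemma expSlope_one_ne_zero (u : ℝ) : expSlope 1 u ≠ 0 := by
  by_cases hu : u = 0
  · simp [expSlope, hu]
  · have hexp : cexp u ≠ 1 := by exact_mod_cast (Real.exp_eq_one_iff u).not.mpr hu
    simp [expSlope, hu, sub_ne_zero.mpr hexp]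

/-- The measure `(1 - r) dr` on `[0, 1]`, the weight in the integral form of the first-order
Taylor remainder. -/
noncomputable def taylorWeight : Measure ℝ :=
  (volume.restrict (Ioc 0 1)).withDensity fun r => ENNReal.ofReal (1 - r)

instance : IsFiniteMeasure taylorWeight := by
  refine isFiniteMeasure_withDensity_ofReal ?_
  exact (Continuous.integrableOn_Ioc (by fun_prop)).hasFiniteIntegral

lemma ae_taylorWeight_mem_Ioc : ∀ᵐ r ∂taylorWeight, r ∈ Ioc (0 : ℝ) 1 :=
  (withDensity_absolutelyContinuous _ _).ae_le (ae_restrict_mem measurableSet_Ioc)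

lemma integral_taylorWeight (f : ℝ → ℂ) :
    ∫ r, f r ∂taylorWeight = ∫ r in (0 : ℝ)..1, (1 - (r : ℂ)) * f r := by
  rw [taylorWeight, integral_withDensity_eq_integral_toReal_smul (by fun_prop) (by simp),
    intervalIntegral.integral_of_le zero_le_one]
  refine setIntegral_congr_fun measurableSet_Ioc fun r hr => ?_
  simp [ENNReal.toReal_ofReal (sub_nonneg.mpr hr.2)]

lemma integral_exp_taylorWeight {w : ℂ} (hw : w ≠ 0) :
    ∫ r : ℝ, cexp (w * r) ∂taylorWeight = (cexp w - 1 - w) / w ^ 2 := by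
  have hderiv : ∀ r ∈ uIcc (0 : ℝ) 1, HasDerivAt
      (fun r : ℝ => (1 - (r : ℂ)) / w * cexp (w * r) + cexp (w * r) / w ^ 2)
      ((1 - (r : ℂ)) * cexp (w * r)) r := by
    intro r _
    have hexp : HasDerivAt (fun v : ℂ => cexp (w * v)) (cexp (w * r) * w) r := by
      simpa using ((hasDerivAt_id (r : ℂ)).const_mul w).cexp
    refine (((((hasDerivAt_id (r : ℂ)).const_sub 1).div_const w).mul hexp).add
      (hexp.div_const (w ^ 2))).comp_ofReal.congr_deriv ?_
    simp only [id]
    field_simp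
    ring
  rw [integral_taylorWeight, intervalIntegral.integral_eq_sub_of_hasDerivAt hderiv
    (Continuous.intervalIntegrable (by fun_prop) _ _)]
  simp only [ofReal_zero, ofReal_one, mul_zero, mul_one, Complex.exp_zero]
  field_simp
  ring

lemma measureReal_univ_taylorWeight : taylorWeight.real univ = 1 / 2 := by
  have h : (taylorWeight.real univ : ℂ) = ((∫ r : ℝ in 0..1, (1 - r) : ℝ) : ℂ) := by
    simpa [← intervalIntegral.integral_ofReal] using integral_taylorWeight fun _ => 1
  rw [ofReal_inj.mp h, intervalIntegral.integral_sub (by simp) (by simp)]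
  norm_num

lemma expRemainder_eq_integral (z : ℂ) (u : ℝ) :
    expRemainder z u = z ^ 2 * ∫ r : ℝ, cexp (z * u * r) ∂taylorWeight := by
  by_cases hu : u = 0
  · simp [expRemainder, hu, measureReal_univ_taylorWeight, div_eq_mul_inv]
  by_cases hz : z = 0
  · simp [expRemainder, hz]
  have hu' : (u : ℂ) ≠ 0 := by exact_mod_cast hu
  rw [expRemainder, if_neg hu, integral_exp_taylorWeight (mul_ne_zero hz hu')]
  field_simp

end ExpKernels

section RemainderTransform

variable {G : Measure ℝ}

/-- The transform `ζ ↦ ∫ (e^{ζx} - 1 - ζx) / (ζx)² G(dx)`, written as the moment generating function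
of the product `x r` under `G(dx) ⊗ (1 - r) dr` so that it is defined, and smooth, at `ζ = 0`. -/
noncomputable def remainderTransform (G : Measure ℝ) : ℂ → ℂ :=
  complexMGF (fun p : ℝ × ℝ => p.1 * p.2) (G.prod taylorWeight)

variable [IsFiniteMeasure G]

lemma integrableExpSet_id_subset_prod_taylorWeight :
    integrableExpSet id G ⊆
      integrableExpSet (fun p : ℝ × ℝ => p.1 * p.2) (G.prod taylorWeight) := by
  intro s hs
  have hbound : Integrable (fun p : ℝ × ℝ => 1 + Real.exp (s * p.1)) (G.prod taylorWeight) :=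
    (integrable_const 1).add (Integrable.comp_fst hs taylorWeight)
  refine hbound.mono' (Continuous.aestronglyMeasurable (by fun_prop)) ?_
  filter_upwards [Measure.quasiMeasurePreserving_snd.ae ae_taylorWeight_mem_Ioc]
    with ⟨x, r⟩ ⟨hr0, hr1⟩
  rw [Real.norm_of_nonneg (Real.exp_nonneg _)]
  rcases le_total 0 (s * x) with hsx | hsx
  · have : s * (x * r) ≤ s * x := by nlinarith
    linarith [Real.exp_le_exp.mpr this]
  · have : Real.exp (s * (x * r)) ≤ 1 := Real.exp_le_one_iff.mpr (by nlinarith)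
    linarith [Real.exp_pos (s * x)]

lemma integrable_cexp_prod_taylorWeight {ζ : ℂ} (hζ : ζ.re ∈ integrableExpSet id G) :
    Integrable (fun p : ℝ × ℝ => cexp (ζ * (p.1 * p.2 : ℝ))) (G.prod taylorWeight) :=
  integrable_cexp_mul_of_re_mem_integrableExpSet (by fun_prop)
    (integrableExpSet_id_subset_prod_taylorWeight hζ)

lemma expRemainder_mul_eq_integral (z : ℂ) (lam x : ℝ) :
    expRemainder z (lam * x) =
      z ^ 2 * ∫ r : ℝ, cexp (lam * z * (x * r : ℝ)) ∂taylorWeight := by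
  rw [expRemainder_eq_integral]
  congr! 4 with r
  push_cast
  ring

variable {lam : ℝ} {z : ℂ}

lemma integrable_expRemainder (h : lam * z.re ∈ integrableExpSet id G) :
    Integrable (fun x => expRemainder z (lam * x)) G := by
  simp_rw [expRemainder_mul_eq_integral]
  exact (integrable_cexp_prod_taylorWeight (ζ := lam * z) (by simpa)).integral_prod_left.const_mul _

lemma integral_expRemainder (h : lam * z.re ∈ integrableExpSet id G) :
    ∫ x, expRemainder z (lam * x) ∂G = z ^ 2 * remainderTransform G (lam * z) := by
  simp_rw [expRemainder_mul_eq_integral, integral_const_mul]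
  rw [remainderTransform, complexMGF,
    integral_prod _ (integrable_cexp_prod_taylorWeight (ζ := lam * z) (by simpa))]

end RemainderTransform

section KolmogorovMeasure

variable {c : ℝ} {K : Measure ℝ}

/-- The Kolmogorov measure `G(dx) = c δ₀(dx) + x² K(dx)` of a Lévy triplet; with it both the
Gaussian and the jump part of a cumulant generating function become integrals of
`expRemainder`. -/
noncomputable def kolmogorovMeasure (c : ℝ) (K : Measure ℝ) : Measure ℝ :=
  ENNReal.ofReal c • Measure.dirac 0 + K.withDensity fun x => ENNReal.ofReal (x ^ 2)

lemma integral_kolmogorovMeasure {E : Type*} [NormedAddCommGroup E] [NormedSpace ℝ E]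
    [CompleteSpace E] {f : ℝ → E} (hc : 0 ≤ c) (hf : Integrable f (kolmogorovMeasure c K)) :
    ∫ x, f x ∂kolmogorovMeasure c K = c • f 0 + ∫ x, x ^ 2 • f x ∂K := by
  obtain ⟨hdirac, hdensity⟩ := integrable_add_measure.mp hf
  rw [kolmogorovMeasure, integral_add_measure hdirac hdensity, integral_smul_measure,
    integral_dirac, integral_withDensity_eq_integral_toReal_smul (by fun_prop) (by simp)]
  simp only [ENNReal.toReal_ofReal hc, ENNReal.toReal_ofReal (sq_nonneg _)]

lemma measureReal_univ_kolmogorovMeasure (hc : 0 ≤ c)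
    [IsFiniteMeasure (kolmogorovMeasure c K)] :
    (kolmogorovMeasure c K).real univ = c + ∫ x, x ^ 2 ∂K := by
  simpa using integral_kolmogorovMeasure hc (integrable_const (1 : ℝ))

lemma mem_integrableExpSet_id_kolmogorovMeasure {s : ℝ}
    (h : Integrable (fun x => x ^ 2 * Real.exp (s * x)) K) :
    s ∈ integrableExpSet id (kolmogorovMeasure c K) := by
  refine integrable_add_measure.mpr ⟨Integrable.smul_measure (integrable_dirac (by simp)) (by simp),
    (integrable_withDensity_iff_integrable_smul' (by fun_prop) (by simp)).mpr ?_⟩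
  simpa only [ENNReal.toReal_ofReal (sq_nonneg _), smul_eq_mul, id] using h

lemma integrable_sq_mul_exp {s : ℝ} (hmin : Integrable (fun x : ℝ => min 1 (x ^ 2)) K)
    (hs : s ∈ interior (integrableExpSet id (K.restrict {x | 1 ≤ |x|}))) :
    Integrable (fun x => x ^ 2 * Real.exp (s * x)) K := by
  have hmeas : MeasurableSet {x : ℝ | 1 ≤ |x|} :=
    measurableSet_le measurable_const measurable_id.abs
  rw [← integrableOn_univ, ← union_compl_self {x : ℝ | 1 ≤ |x|}]
  refine IntegrableOn.union ?_ ?_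
  · simpa [IntegrableOn] using integrable_pow_abs_mul_exp_of_mem_interior_integrableExpSet hs 2
  · refine (hmin.integrableOn.mul_const (Real.exp |s|)).mono'
      (Continuous.aestronglyMeasurable (by fun_prop)) ?_
    filter_upwards [ae_restrict_mem hmeas.compl] with x hx
    have hx1 : |x| < 1 := not_le.mp hx
    have hsx : s * x ≤ |s| :=
      (le_abs_self _).trans (abs_mul s x ▸ mul_le_of_le_one_right (abs_nonneg s) hx1.le)
    rw [min_eq_right ((sq_le_one_iff_abs_le_one x).mpr hx1.le),
      Real.norm_of_nonneg (by positivity)]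
    gcongr

lemma subset_interior_integrableExpSet_kolmogorovMeasure {D : Set ℝ} (hD : IsOpen D)
    (hmin : Integrable (fun x : ℝ => min 1 (x ^ 2)) K)
    (hexp : D ⊆ integrableExpSet id (K.restrict {x | 1 ≤ |x|})) :
    D ⊆ interior (integrableExpSet id (kolmogorovMeasure c K)) :=
  interior_maximal (fun _ hs => mem_integrableExpSet_id_kolmogorovMeasure
    (integrable_sq_mul_exp hmin (interior_maximal hexp hD hs))) hD

lemma isFiniteMeasure_of_zero_mem_integrableExpSet {Ω : Type*} [MeasurableSpace Ω]
    {X : Ω → ℝ} {ν : Measure Ω} (h : 0 ∈ integrableExpSet X ν) : IsFiniteMeasure ν := by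
  have h1 : Integrable (fun _ => (1 : ℝ)) ν := by simpa [integrableExpSet] using h
  exact (integrable_const_iff.mp h1).resolve_left one_ne_zero

lemma neZero_kolmogorovMeasure (hc : 0 ≤ c) [IsFiniteMeasure (kolmogorovMeasure c K)]
    (hσ : c + ∫ x : ℝ, x ^ 2 ∂K ≠ 0) : NeZero (kolmogorovMeasure c K) where
  out h := hσ (by simp [← measureReal_univ_kolmogorovMeasure hc, h])

lemma subset_interior_integrableExpSet_of_lintegral_ne_top {D : Set ℝ} (hD : IsOpen D) (c : ℝ)
    (hmin : ∫⁻ x : ℝ, ENNReal.ofReal (min 1 (x ^ 2)) ∂K ≠ ⊤)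
    (hexp : ∀ s ∈ D, ∫⁻ x in {x : ℝ | 1 ≤ |x|}, ENNReal.ofReal (Real.exp (s * x)) ∂K ≠ ⊤) :
    D ⊆ interior (integrableExpSet id (kolmogorovMeasure c K)) := by
  refine subset_interior_integrableExpSet_kolmogorovMeasure hD
    ((lintegral_ofReal_ne_top_iff_integrable ?_ (.of_forall fun x => ?_)).mp hmin) fun s hs =>
      (lintegral_ofReal_ne_top_iff_integrable ?_ (.of_forall fun x => ?_)).mp (hexp s hs)
  · exact Continuous.aestronglyMeasurable (by fun_prop)
  · positivity
  · exact Continuous.aestronglyMeasurable (by fun_prop)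
  · positivity

end KolmogorovMeasure

section Covariance

variable {μ c : ℝ} {K : Measure ℝ} {lam : ℝ} {y z : ℂ}

lemma kappa_conj (z : ℂ) :
    kappa μ c K lam (starRingEnd ℂ z) = starRingEnd ℂ (kappa μ c K lam z) := by
  by_cases hlam : lam = 0
  · simp [kappa, hlam, conj_ofNat]
  · simp [kappa, hlam, conj_ofNat, ← integral_conj, ← Complex.exp_conj]

lemma LamMV_eq_div_kbar (lam : ℝ) :
    LamMV μ c K lam = kappa μ c K lam 1 / kbar μ c K lam 1 1 := by
  rw [LamMV, kbar, one_add_one_eq_two]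
  congr 1
  ring

lemma etaLK_eq_sub_LamMV_mul_kbar (lam : ℝ) (z : ℂ) :
    etaLK μ c K lam z = kappa μ c K lam z - LamMV μ c K lam * kbar μ c K lam z 1 := by
  rw [etaLK, gamLK, LamMV_eq_div_kbar]
  ring

lemma etaLK_zero (hσ : c + ∫ x : ℝ, x ^ 2 ∂K ≠ 0) (z : ℂ) :
    etaLK μ c K 0 z = ((c + ∫ x : ℝ, x ^ 2 ∂K : ℝ) : ℂ) / 2 * z * (z - 1) := by
  have hσ' : ((c + ∫ x : ℝ, x ^ 2 ∂K : ℝ) : ℂ) ≠ 0 := by exact_mod_cast hσ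
  rw [etaLK, gamLK]
  simp only [kbar, kappa, if_true]
  generalize ((c + ∫ x : ℝ, x ^ 2 ∂K : ℝ) : ℂ) = v at hσ'
  have hone : (μ * (1 + 1) + v / 2 * (1 + 1) ^ 2 - (μ * 1 + v / 2 * 1 ^ 2) -
      (μ * 1 + v / 2 * 1 ^ 2) : ℂ) = v := by ring
  rw [hone]
  field_simp
  ring

variable [IsFiniteMeasure (kolmogorovMeasure c K)]

lemma kappa_eq_integral (hc : 0 ≤ c)
    (hz : lam * z.re ∈ integrableExpSet id (kolmogorovMeasure c K)) :
    kappa μ c K lam z =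
      μ * z + ∫ x, expRemainder z (lam * x) ∂kolmogorovMeasure c K := by
  by_cases hlam : lam = 0
  · simp [kappa, expRemainder, hlam, measureReal_univ_kolmogorovMeasure hc]
    ring
  · rw [integral_kolmogorovMeasure hc (integrable_expRemainder hz), kappa, if_neg hlam,
      ← integral_const_mul, mul_zero, add_assoc]
    congr 2
    · simp [expRemainder]
      ring
    · refine integral_congr_ae (.of_forall fun x => ?_)
      by_cases hx : x = 0
      · simp [hx]
      · have hx' : (x : ℂ) ≠ 0 := by exact_mod_cast hx
        have hlam' : (lam : ℂ) ≠ 0 := by exact_mod_cast hlam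
        simp only [expRemainder, mul_eq_zero, hlam, hx, or_self, if_false, real_smul, ofReal_mul,
          ofReal_pow]
        field_simp

lemma kappa_eq_remainderTransform (hc : 0 ≤ c)
    (hz : lam * z.re ∈ integrableExpSet id (kolmogorovMeasure c K)) :
    kappa μ c K lam z =
      μ * z + z ^ 2 * remainderTransform (kolmogorovMeasure c K) (lam * z) := by
  rw [kappa_eq_integral hc hz, integral_expRemainder hz]

lemma integrable_expSlope_mul_expSlope
    (hy : lam * y.re ∈ integrableExpSet id (kolmogorovMeasure c K))
    (hz : lam * z.re ∈ integrableExpSet id (kolmogorovMeasure c K))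
    (hyz : lam * (y + z).re ∈ integrableExpSet id (kolmogorovMeasure c K)) :
    Integrable (fun x => expSlope y (lam * x) * expSlope z (lam * x))
      (kolmogorovMeasure c K) := by
  simp_rw [expSlope_mul_expSlope]
  exact ((integrable_expRemainder hyz).sub (integrable_expRemainder hy)).sub
    (integrable_expRemainder hz)

lemma kbar_eq_integral (hc : 0 ≤ c)
    (hy : lam * y.re ∈ integrableExpSet id (kolmogorovMeasure c K))
    (hz : lam * z.re ∈ integrableExpSet id (kolmogorovMeasure c K))
    (hyz : lam * (y + z).re ∈ integrableExpSet id (kolmogorovMeasure c K)) :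
    kbar μ c K lam y z =
      ∫ x, expSlope y (lam * x) * expSlope z (lam * x) ∂kolmogorovMeasure c K := by
  simp_rw [expSlope_mul_expSlope]
  rw [integral_sub (.sub' (integrable_expRemainder hyz) (integrable_expRemainder hy))
      (integrable_expRemainder hz),
    integral_sub (integrable_expRemainder hyz) (integrable_expRemainder hy), kbar,
    kappa_eq_integral hc hy, kappa_eq_integral hc hz, kappa_eq_integral hc hyz]
  ring

end Covariance

section CovarianceBounds

variable {μ c : ℝ} {K : Measure ℝ} {lam s t : ℝ} {y z : ℂ}

lemma mul_add_mem_of_two_mul_mem {C : Set ℝ} (hC : Convex ℝ C)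
    (hs : lam * (2 * s) ∈ C) (ht : lam * (2 * t) ∈ C) : lam * (s + t) ∈ C := by
  have hmid : lam * (s + t) = midpoint ℝ (lam * (2 * s)) (lam * (2 * t)) := by
    rw [midpoint_eq_smul_add, invOf_eq_inv, smul_eq_mul]
    ring
  exact hmid ▸ hC.midpoint_mem hs ht

lemma mul_mem_of_two_mul_mem {C : Set ℝ} (hC : Convex ℝ C) (h0 : 0 ∈ C)
    (hs : lam * (2 * s) ∈ C) : lam * s ∈ C := by
  simpa using mul_add_mem_of_two_mul_mem (t := 0) hC hs (by simpa)

lemma mul_mem_integrableExpSet_of_two_mul_mem {G : Measure ℝ} [IsFiniteMeasure G]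
    (hs : lam * (2 * s) ∈ integrableExpSet id G) : lam * s ∈ integrableExpSet id G :=
  mul_mem_of_two_mul_mem convex_integrableExpSet (by simp [integrableExpSet]) hs

variable [IsFiniteMeasure (kolmogorovMeasure c K)]

lemma integrable_norm_expSlope_sq
    (hz : lam * (2 * z.re) ∈ integrableExpSet id (kolmogorovMeasure c K)) :
    Integrable (fun x => ‖expSlope z (lam * x)‖ ^ 2) (kolmogorovMeasure c K) := by
  have hz' := mul_mem_integrableExpSet_of_two_mul_mem hz
  have h := integrable_expSlope_mul_expSlope (y := starRingEnd ℂ z) (z := z) (by simpa) hz'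
    (by simpa [← two_mul])
  simpa [expSlope_conj, conj_mul', ← ofReal_pow] using h.re

lemma kbar_conj_self (hc : 0 ≤ c)
    (hz : lam * (2 * z.re) ∈ integrableExpSet id (kolmogorovMeasure c K)) :
    kbar μ c K lam z (starRingEnd ℂ z) =
      ((∫ x, ‖expSlope z (lam * x)‖ ^ 2 ∂kolmogorovMeasure c K : ℝ) : ℂ) := by
  have hz' := mul_mem_integrableExpSet_of_two_mul_mem hz
  rw [kbar_eq_integral hc hz' (by simpa) (by simpa [← two_mul]), ← integral_complex_ofReal]
  simp_rw [expSlope_conj, mul_conj', ofReal_pow]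

/-- Young's inequality for the positive semidefinite form `(y, z) ↦ kbar y (conj z)`. -/
lemma norm_mul_kbar_le (hc : 0 ≤ c) (w : ℂ)
    (hy : lam * (2 * y.re) ∈ integrableExpSet id (kolmogorovMeasure c K))
    (hz : lam * (2 * z.re) ∈ integrableExpSet id (kolmogorovMeasure c K)) :
    ‖w * kbar μ c K lam y z‖ ≤ (kbar μ c K lam y (starRingEnd ℂ y)).re / 2 +
      ‖w‖ ^ 2 * (kbar μ c K lam z (starRingEnd ℂ z)).re / 2 := by
  have hy2 := integrable_norm_expSlope_sq hy
  have hz2 := integrable_norm_expSlope_sq hz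
  rw [kbar_conj_self hc hy, kbar_conj_self hc hz, ofReal_re, ofReal_re, ← integral_const_mul,
    ← integral_div, ← integral_div, ← integral_add (hy2.div_const 2)
      ((hz2.const_mul _).div_const 2),
    kbar_eq_integral hc (mul_mem_integrableExpSet_of_two_mul_mem hy)
      (mul_mem_integrableExpSet_of_two_mul_mem hz)
      (by simpa using mul_add_mem_of_two_mul_mem convex_integrableExpSet hy hz),
    ← integral_const_mul]
  refine norm_integral_le_of_norm_le ((hy2.div_const 2).add ((hz2.const_mul _).div_const 2))
    (.of_forall fun x => ?_)
  rw [norm_mul, norm_mul]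
  linarith [two_mul_le_add_sq ‖expSlope y (lam * x)‖ (‖w‖ * ‖expSlope z (lam * x)‖),
    mul_pow ‖w‖ ‖expSlope z (lam * x)‖ 2]

lemma kbar_one_one_ne_zero (hc : 0 ≤ c) [NeZero (kolmogorovMeasure c K)]
    (h2 : lam * 2 ∈ integrableExpSet id (kolmogorovMeasure c K)) :
    kbar μ c K lam 1 1 ≠ 0 := by
  have hint := integrable_norm_expSlope_sq (z := 1) (by simpa using h2)
  have hpos : 0 < ∫ x, ‖expSlope 1 (lam * x)‖ ^ 2 ∂kolmogorovMeasure c K := by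
    rw [integral_pos_iff_support_of_nonneg (fun x => sq_nonneg _) hint,
      Function.support_eq_univ fun x => pow_ne_zero 2 (norm_ne_zero_iff.mpr
        (expSlope_one_ne_zero _))]
    simpa [pos_iff_ne_zero] using NeZero.ne (kolmogorovMeasure c K)
  have h := kbar_conj_self (μ := μ) (z := 1) hc (by simpa using h2)
  rw [map_one] at h
  rw [h]
  exact_mod_cast hpos.ne'

lemma re_etaLK_le (hc : 0 ≤ c)
    (h2 : lam * 2 ∈ integrableExpSet id (kolmogorovMeasure c K))
    (hz : lam * (2 * z.re) ∈ integrableExpSet id (kolmogorovMeasure c K)) :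
    (etaLK μ c K lam z).re ≤ (kappa μ c K lam ((2 * z.re : ℝ) : ℂ)).re / 2 +
      ‖LamMV μ c K lam‖ ^ 2 * (kbar μ c K lam 1 1).re / 2 := by
  have hyoung := norm_mul_kbar_le (μ := μ) (z := 1) hc (LamMV μ c K lam) hz (by simpa using h2)
  have hre := neg_le_of_abs_le (abs_re_le_norm (LamMV μ c K lam * kbar μ c K lam z 1))
  have hdiag : (kbar μ c K lam z (starRingEnd ℂ z)).re =
      (kappa μ c K lam ((2 * z.re : ℝ) : ℂ)).re - 2 * (kappa μ c K lam z).re := by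
    rw [kbar, kappa_conj, add_conj, sub_re, sub_re, conj_re]
    ring
  rw [map_one] at hyoung
  rw [etaLK_eq_sub_LamMV_mul_kbar, sub_re]
  linarith

end CovarianceBounds

section StripBounded

variable {D : Set ℝ} {f : ℂ → ℂ}

/-- Holomorphic functions on the vertical strip over `D` that are bounded on the strip over some
neighbourhood of each point of `D`. -/
structure IsStripBounded (D : Set ℝ) (f : ℂ → ℂ) : Prop where
  differentiableOn : DifferentiableOn ℂ f {z | z.re ∈ D}
  isBigO : ∀ s ∈ D, f =O[comap re (𝓝 s)] (1 : ℂ → ℝ)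

lemma isStripBounded_complexMGF {Ω : Type*} [MeasurableSpace Ω] {P : Measure Ω} {X : Ω → ℝ} :
    IsStripBounded (interior (integrableExpSet X P)) (complexMGF X P) where
  differentiableOn := differentiableOn_complexMGF
  isBigO s hs := by
    have hmgf : mgf X P =O[𝓝 s] (1 : ℝ → ℝ) :=
      (continuousOn_mgf.continuousAt (isOpen_interior.mem_nhds hs)).isBigO_one ℝ
    refine IsBigO.trans ?_ (hmgf.comp_tendsto tendsto_comap)
    exact isBigO_of_le _ fun z => norm_complexMGF_le_mgf.trans (le_abs_self _)

lemma IsStripBounded.deriv (hD : IsOpen D) (hf : IsStripBounded D f) :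
    IsStripBounded D (deriv f) where
  differentiableOn := hf.differentiableOn.deriv (hD.preimage continuous_re)
  isBigO s hs := by
    obtain ⟨C, hC⟩ := (hf.isBigO s hs).bound
    obtain ⟨ε, hε, hball⟩ := Metric.eventually_nhds_iff_ball.mp
      ((eventually_comap.mp hC).and (hD.mem_nhds hs))
    have hhalf : ∀ᶠ z in comap re (𝓝 s), z.re ∈ Metric.ball s (ε / 2) :=
      tendsto_comap.eventually (Metric.ball_mem_nhds s (half_pos hε))
    refine .of_bound (C / (ε / 2)) (hhalf.mono fun z hz => ?_)
    have hmem : ∀ w ∈ Metric.closedBall z (ε / 2), w.re ∈ Metric.ball s ε := fun w hw => by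
      have hwz : |w.re - z.re| ≤ ε / 2 :=
        (abs_re_le_norm (w - z)).trans (mem_closedBall_iff_norm.mp hw)
      rw [Metric.mem_ball, Real.dist_eq] at hz ⊢
      linarith [abs_sub_le w.re z.re s]
    simp only [Pi.one_apply, norm_one, mul_one] at hball ⊢
    exact norm_deriv_le_of_forall_mem_sphere_norm_le (half_pos hε)
      ((hf.differentiableOn.mono fun w hw => (hball _ (hmem w hw)).2).diffContOnCl_ball
        subset_rfl)
      fun w hw => (hball _ (hmem w (Metric.sphere_subset_closedBall hw))).1 w rfl

end StripBounded

section PolyGrowth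

variable {E : Type*} [NormedAddCommGroup E] {U : Set ℝ} {n : ℕ} {q q₁ q₂ : ℝ → E → ℂ}

/-- Jointly continuous families `q l y` that grow at most polynomially in `y`, locally uniformly
in the parameter `l ∈ U`. -/
structure PolyGrowthOn (U : Set ℝ) (q : ℝ → E → ℂ) : Prop where
  continuousOn : ContinuousOn (uncurry q) (U ×ˢ univ)
  isBigO : ∀ l ∈ U, ∃ N : ℕ,
    uncurry q =O[comap Prod.fst (𝓝 l)] fun p : ℝ × E => (1 + ‖p.2‖) ^ N

lemma isBigO_one_add_norm_pow {N M : ℕ} (h : N ≤ M) (F : Filter (ℝ × E)) :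
    (fun p : ℝ × E => (1 + ‖p.2‖) ^ N) =O[F] fun p : ℝ × E => (1 + ‖p.2‖) ^ M := by
  refine isBigO_of_le _ fun p => ?_
  have hone : 1 ≤ 1 + ‖p.2‖ := le_add_of_nonneg_right (norm_nonneg _)
  rw [Real.norm_of_nonneg (by positivity), Real.norm_of_nonneg (by positivity)]
  exact pow_le_pow_right₀ hone h

namespace PolyGrowthOn

lemma add (h₁ : PolyGrowthOn U q₁) (h₂ : PolyGrowthOn U q₂) :
    PolyGrowthOn U fun l y => q₁ l y + q₂ l y where
  continuousOn := h₁.continuousOn.add h₂.continuousOn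
  isBigO l hl := by
    obtain ⟨N₁, hN₁⟩ := h₁.isBigO l hl
    obtain ⟨N₂, hN₂⟩ := h₂.isBigO l hl
    exact ⟨max N₁ N₂, (hN₁.trans (isBigO_one_add_norm_pow (le_max_left _ _) _)).add
      (hN₂.trans (isBigO_one_add_norm_pow (le_max_right _ _) _))⟩

lemma mul (h₁ : PolyGrowthOn U q₁) (h₂ : PolyGrowthOn U q₂) :
    PolyGrowthOn U fun l y => q₁ l y * q₂ l y where
  continuousOn := h₁.continuousOn.mul h₂.continuousOn
  isBigO l hl := by
    obtain ⟨N₁, hN₁⟩ := h₁.isBigO l hl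
    obtain ⟨N₂, hN₂⟩ := h₂.isBigO l hl
    refine ⟨N₁ + N₂, ?_⟩
    simp_rw [pow_add]
    exact hN₁.mul hN₂

lemma of_isBigO_one (hcont : ContinuousOn (uncurry q) (U ×ˢ univ))
    (h : ∀ l ∈ U, uncurry q =O[comap Prod.fst (𝓝 l)] (1 : ℝ × E → ℝ)) : PolyGrowthOn U q where
  continuousOn := hcont
  isBigO l hl := ⟨0, by simp_rw [pow_zero]; exact h l hl⟩

lemma of_continuousOn {g : ℝ → ℂ} (hU : IsOpen U) (hg : ContinuousOn g U) :
    PolyGrowthOn U fun l (_ : E) => g l :=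
  of_isBigO_one (hg.comp continuousOn_fst fun _ hp => hp.1) fun _ hl =>
    ((hg.continuousAt (hU.mem_nhds hl)).isBigO_one ℝ).comp_tendsto tendsto_comap

lemma exp (h : PolyGrowthOn U q) (hre : ∀ l ∈ U,
      IsBoundedUnder (· ≤ ·) (comap Prod.fst (𝓝 l)) fun p : ℝ × E => (uncurry q p).re) :
    PolyGrowthOn U fun l y => cexp (q l y) :=
  of_isBigO_one h.continuousOn.cexp fun l hl => by
    obtain ⟨M, hM⟩ := hre l hl
    refine .of_bound (Real.exp M) ((eventually_map.mp hM).mono fun p hp => ?_)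
    simpa [uncurry, norm_exp] using hp

lemma congr (hU : IsOpen U) (h : PolyGrowthOn U q₁) (heq : ∀ l ∈ U, ∀ y, q₂ l y = q₁ l y) :
    PolyGrowthOn U q₂ where
  continuousOn := h.continuousOn.congr fun p hp => heq p.1 hp.1 p.2
  isBigO l hl := by
    obtain ⟨N, hN⟩ := h.isBigO l hl
    refine ⟨N, hN.congr' ?_ .rfl⟩
    filter_upwards [tendsto_comap.eventually (hU.mem_nhds hl)] with p hp
    exact (heq p.1 hp p.2).symm

end PolyGrowthOn

/-- Families whose `l`-derivatives up to order `n` all satisfy `PolyGrowthOn U`. -/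
inductive HasPolyGrowthDerivs (U : Set ℝ) : ℕ → (ℝ → E → ℂ) → Prop
  | zero {q : ℝ → E → ℂ} (h : PolyGrowthOn U q) : HasPolyGrowthDerivs U 0 q
  | succ {n : ℕ} {q q' : ℝ → E → ℂ} (h : PolyGrowthOn U q)
      (hderiv : ∀ l ∈ U, ∀ y, HasDerivAt (fun l => q l y) (q' l y) l)
      (h' : HasPolyGrowthDerivs U n q') : HasPolyGrowthDerivs U (n + 1) q

namespace HasPolyGrowthDerivs

lemma polyGrowthOn (h : HasPolyGrowthDerivs U n q) : PolyGrowthOn U q := by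
  cases h <;> assumption

lemma pred (h : HasPolyGrowthDerivs U (n + 1) q) : HasPolyGrowthDerivs U n q := by
  induction n generalizing q with
  | zero => exact .zero h.polyGrowthOn
  | succ n ih => cases h with | succ h hderiv h' => exact .succ h hderiv (ih h')

lemma add (h₁ : HasPolyGrowthDerivs U n q₁) (h₂ : HasPolyGrowthDerivs U n q₂) :
    HasPolyGrowthDerivs U n fun l y => q₁ l y + q₂ l y := by
  induction n generalizing q₁ q₂ with
  | zero => exact .zero (h₁.polyGrowthOn.add h₂.polyGrowthOn)
  | succ n ih =>
    obtain _ | ⟨hq₁, hderiv₁, h₁'⟩ := h₁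
    obtain _ | ⟨hq₂, hderiv₂, h₂'⟩ := h₂
    exact .succ (hq₁.add hq₂) (fun l hl y => (hderiv₁ l hl y).add (hderiv₂ l hl y)) (ih h₁' h₂')

lemma mul (h₁ : HasPolyGrowthDerivs U n q₁) (h₂ : HasPolyGrowthDerivs U n q₂) :
    HasPolyGrowthDerivs U n fun l y => q₁ l y * q₂ l y := by
  induction n generalizing q₁ q₂ with
  | zero => exact .zero (h₁.polyGrowthOn.mul h₂.polyGrowthOn)
  | succ n ih =>
    have hpred₁ := h₁.pred
    have hpred₂ := h₂.pred
    obtain _ | ⟨hq₁, hderiv₁, h₁'⟩ := h₁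
    obtain _ | ⟨hq₂, hderiv₂, h₂'⟩ := h₂
    exact .succ (hq₁.mul hq₂) (fun l hl y => (hderiv₁ l hl y).mul (hderiv₂ l hl y))
      ((ih h₁' hpred₂).add (ih hpred₁ h₂'))

lemma const {p : E → ℂ} (h : PolyGrowthOn U fun _ => p) : HasPolyGrowthDerivs U n fun _ => p := by
  induction n generalizing p with
  | zero => exact .zero h
  | succ n ih =>
    refine .succ h (fun l _ y => hasDerivAt_const l (p y)) (ih ?_)
    exact .of_isBigO_one continuousOn_const fun _ _ => isBigO_zero _ _

lemma of_contDiffOn (hU : IsOpen U) {g : ℝ → ℂ} (hg : ContDiffOn ℝ n g U) :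
    HasPolyGrowthDerivs U n fun l (_ : E) => g l := by
  induction n generalizing g with
  | zero => exact .zero (.of_continuousOn hU hg.continuousOn)
  | succ n ih =>
    obtain ⟨hdiff, _, hderiv⟩ :=
      (contDiffOn_succ_iff_deriv_of_isOpen (n := (n : ℕ∞)) hU).mp (by exact_mod_cast hg)
    exact .succ (.of_continuousOn hU hg.continuousOn)
      (fun l hl _ => (hdiff.differentiableAt (hU.mem_nhds hl)).hasDerivAt) (ih hderiv)

lemma neg (h : HasPolyGrowthDerivs U n q) : HasPolyGrowthDerivs U n fun l y => -q l y := by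
  simpa using (const (.of_isBigO_one continuousOn_const
    fun _ _ => isBigO_const_const _ one_ne_zero _) : HasPolyGrowthDerivs U n fun _ _ => -1).mul h

lemma sub (h₁ : HasPolyGrowthDerivs U n q₁) (h₂ : HasPolyGrowthDerivs U n q₂) :
    HasPolyGrowthDerivs U n fun l y => q₁ l y - q₂ l y := by
  simpa only [sub_eq_add_neg] using h₁.add h₂.neg

lemma congr (hU : IsOpen U) (h : HasPolyGrowthDerivs U n q₁)
    (heq : ∀ l ∈ U, ∀ y, q₂ l y = q₁ l y) : HasPolyGrowthDerivs U n q₂ := by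
  cases h with
  | zero h => exact .zero (h.congr hU heq)
  | succ h hderiv h' =>
    refine .succ (h.congr hU heq) (fun l hl y => (hderiv l hl y).congr_of_eventuallyEq ?_) h'
    filter_upwards [hU.mem_nhds hl] with l' hl'
    exact heq l' hl' y

lemma exp (h : HasPolyGrowthDerivs U n q) (hre : ∀ l ∈ U,
      IsBoundedUnder (· ≤ ·) (comap Prod.fst (𝓝 l)) fun p : ℝ × E => (uncurry q p).re) :
    HasPolyGrowthDerivs U n fun l y => cexp (q l y) := by
  induction n with
  | zero => exact .zero (h.polyGrowthOn.exp hre)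
  | succ n ih =>
    have hexp := ih h.pred
    obtain _ | ⟨hq, hderiv, h'⟩ := h
    exact .succ (hq.exp hre) (fun l hl y => (hderiv l hl y).cexp) (hexp.mul h')

lemma contDiffOn (hU : IsOpen U) (h : HasPolyGrowthDerivs U n q) (y : E) :
    ContDiffOn ℝ n (fun l => q l y) U := by
  induction h with
  | zero h =>
    exact contDiffOn_zero.mpr
      (h.continuousOn.comp (f := fun l => (l, y)) (by fun_prop) fun l hl => ⟨hl, mem_univ y⟩)
  | succ _ hderiv _ ih =>
    refine (contDiffOn_succ_iff_deriv_of_isOpen hU).mpr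
      ⟨fun l hl => (hderiv l hl y).differentiableAt.differentiableWithinAt, by simp,
        ih.congr fun l hl => (hderiv l hl y).deriv⟩

end HasPolyGrowthDerivs

end PolyGrowth

section Integral

variable {E : Type*} [NormedAddCommGroup E] [MeasurableSpace E] {ν : Measure E} {U : Set ℝ}
  {n : ℕ} {q q' : ℝ → E → ℂ} {w : E → ℂ} {l : ℝ}

lemma PolyGrowthOn.exists_integrable_bound (hq : PolyGrowthOn U q)
    (hw : ∀ N : ℕ, Integrable (fun y => (1 + ‖y‖) ^ N * ‖w y‖) ν) (hl : l ∈ U) :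
    ∃ bound : E → ℝ, Integrable bound ν ∧ ∀ᶠ l' in 𝓝 l, ∀ y, ‖q l' y * w y‖ ≤ bound y := by
  obtain ⟨N, hN⟩ := hq.isBigO l hl
  obtain ⟨C, hC⟩ := hN.bound
  refine ⟨fun y => C * ((1 + ‖y‖) ^ N * ‖w y‖), (hw N).const_mul C,
    (eventually_comap.mp hC).mono fun l' hl' y => ?_⟩
  have hqy := hl' (l', y) rfl
  rw [Real.norm_of_nonneg (by positivity)] at hqy
  simp only [norm_mul, ← mul_assoc]
  exact mul_le_mul_of_nonneg_right hqy (norm_nonneg _)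

variable [BorelSpace E]

lemma PolyGrowthOn.aestronglyMeasurable_mul (hq : PolyGrowthOn U q)
    (hw : AEStronglyMeasurable w ν) (hl : l ∈ U) :
    AEStronglyMeasurable (fun y => q l y * w y) ν := by
  have hcont : Continuous (q l) := continuousOn_univ.mp
    (hq.continuousOn.comp (f := fun y => (l, y)) (by fun_prop) fun y hy => ⟨hl, hy⟩)
  exact hcont.aestronglyMeasurable.mul hw

lemma PolyGrowthOn.continuousOn_integral_mul (hU : IsOpen U) (hq : PolyGrowthOn U q)
    (hwm : AEStronglyMeasurable w ν)
    (hw : ∀ N : ℕ, Integrable (fun y => (1 + ‖y‖) ^ N * ‖w y‖) ν) :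
    ContinuousOn (fun l => ∫ y, q l y * w y ∂ν) U := by
  refine fun l hl => ContinuousAt.continuousWithinAt ?_
  obtain ⟨bound, hbound_int, hbound⟩ := hq.exists_integrable_bound hw hl
  refine continuousAt_of_dominated
    ((hU.eventually_mem hl).mono fun l' hl' => hq.aestronglyMeasurable_mul hwm hl')
    (hbound.mono fun l' h => .of_forall h) hbound_int (.of_forall fun y => ?_)
  have hqy : ContinuousOn (fun l => q l y) U :=
    hq.continuousOn.comp (f := fun l => (l, y)) (by fun_prop) fun l hl => ⟨hl, mem_univ y⟩
  exact (hqy.continuousAt (hU.mem_nhds hl)).mul continuousAt_const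

lemma PolyGrowthOn.hasDerivAt_integral_mul (hU : IsOpen U) (hq : PolyGrowthOn U q)
    (hq' : PolyGrowthOn U q') (hderiv : ∀ l ∈ U, ∀ y, HasDerivAt (fun l => q l y) (q' l y) l)
    (hwm : AEStronglyMeasurable w ν)
    (hw : ∀ N : ℕ, Integrable (fun y => (1 + ‖y‖) ^ N * ‖w y‖) ν) (hl : l ∈ U) :
    HasDerivAt (fun l => ∫ y, q l y * w y ∂ν) (∫ y, q' l y * w y ∂ν) l := by
  obtain ⟨bound, hbound_int, hbound⟩ := hq.exists_integrable_bound hw hl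
  obtain ⟨bound', hbound_int', hbound'⟩ := hq'.exists_integrable_bound hw hl
  exact (hasDerivAt_integral_of_dominated_loc_of_deriv_le
    (hbound'.and (hU.mem_nhds hl))
    ((hU.eventually_mem hl).mono fun l' hl' => hq.aestronglyMeasurable_mul hwm hl')
    (hbound_int.mono' (hq.aestronglyMeasurable_mul hwm hl) (.of_forall hbound.self_of_nhds))
    (hq'.aestronglyMeasurable_mul hwm hl) (.of_forall fun y l' hl' => hl'.1 y) hbound_int'
    (.of_forall fun y l' hl' => (hderiv l' hl'.2 y).mul_const (w y))).2

lemma HasPolyGrowthDerivs.contDiffOn_integral_mul (hU : IsOpen U)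
    (hq : HasPolyGrowthDerivs U n q) (hwm : AEStronglyMeasurable w ν)
    (hw : ∀ N : ℕ, Integrable (fun y => (1 + ‖y‖) ^ N * ‖w y‖) ν) :
    ContDiffOn ℝ n (fun l => ∫ y, q l y * w y ∂ν) U := by
  induction hq with
  | zero h => exact contDiffOn_zero.mpr (h.continuousOn_integral_mul hU hwm hw)
  | succ h hderiv h' ih =>
    have hint := fun l hl => h.hasDerivAt_integral_mul hU h'.polyGrowthOn hderiv hwm hw (l := l) hl
    exact (contDiffOn_succ_iff_deriv_of_isOpen hU).mpr
      ⟨fun l hl => (hint l hl).differentiableAt.differentiableWithinAt, by simp,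
        ih.congr fun l hl => (hint l hl).deriv⟩

end Integral

section VerticalLine

variable {D U : Set ℝ} {R : ℝ} {n : ℕ}

lemma zLine_re (R y : ℝ) : (zLine R y).re = R := by simp [zLine]

lemma zLine_add_one (R y : ℝ) : zLine R y + 1 = zLine (R + 1) y := by
  simp only [zLine, ofReal_add, ofReal_one]
  ring

lemma polyGrowthOn_zLine : PolyGrowthOn U fun _ => zLine R where
  continuousOn := Continuous.continuousOn (by unfold zLine; fun_prop)
  isBigO l _ := by
    refine ⟨1, .of_bound (|R| + 1) (.of_forall fun p => ?_)⟩
    have h : ‖zLine R p.2‖ ≤ |R| + |p.2| := by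
      simpa [zLine] using norm_add_le (R : ℂ) (p.2 * I)
    rw [pow_one, Real.norm_of_nonneg (by positivity), Real.norm_eq_abs]
    exact h.trans (by nlinarith [abs_nonneg R, abs_nonneg p.2])

lemma mul_zLine_re (l R y : ℝ) : (l * zLine R y).re = l * R := by simp [zLine]

lemma IsStripBounded.polyGrowthOn_comp_mul_zLine {f : ℂ → ℂ} (hf : IsStripBounded D f)
    (hR : ∀ l ∈ U, l * R ∈ D) : PolyGrowthOn U fun l y => f (l * zLine R y) := by
  refine .of_isBigO_one (hf.differentiableOn.continuousOn.comp
    (f := fun p : ℝ × ℝ => (p.1 * zLine R p.2 : ℂ)) (by unfold zLine; fun_prop)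
    fun p hp => by simpa only [mem_ofPred, mul_zLine_re] using hR _ hp.1) fun l hl => ?_
  refine (hf.isBigO (l * R) (hR l hl)).comp_tendsto
    (k := fun p : ℝ × ℝ => (p.1 * zLine R p.2 : ℂ)) (tendsto_comap_iff.mpr ?_)
  simp only [comp_def, mul_zLine_re]
  exact (continuous_mul_const R).continuousAt.tendsto.comp tendsto_comap

lemma IsStripBounded.hasPolyGrowthDerivs_comp_mul_zLine {f : ℂ → ℂ} (hD : IsOpen D)
    (hf : IsStripBounded D f) (hR : ∀ l ∈ U, l * R ∈ D) :
    HasPolyGrowthDerivs U n fun l y => f (l * zLine R y) := by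
  induction n generalizing f with
  | zero => exact .zero (hf.polyGrowthOn_comp_mul_zLine hR)
  | succ n ih =>
    refine .succ (hf.polyGrowthOn_comp_mul_zLine hR) (fun l hl y => ?_)
      ((ih (hf.deriv hD)).mul (.const (polyGrowthOn_zLine (R := R))))
    have hinner : HasDerivAt (fun l : ℝ => (l * zLine R y : ℂ)) (zLine R y) l := by
      simpa using (hasDerivAt_id l).ofReal_comp.mul_const (zLine R y)
    have hmem : {z : ℂ | z.re ∈ D} ∈ 𝓝 (l * zLine R y : ℂ) :=
      (hD.preimage continuous_re).mem_nhds (by simpa [zLine_re] using hR l hl)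
    exact (hf.differentiableOn.differentiableAt hmem).hasDerivAt.comp l hinner

end VerticalLine

section Interpolation

variable {μ c : ℝ} {K : Measure ℝ} {R : ℝ} {n : ℕ}

/-- The parameters `λ` for which `2λ` and `2λR` are interior to the set of finite exponential
moments of the Kolmogorov measure. On this open set `re_etaLK_le` bounds `η(λ, R + iy)` above
uniformly in `y`. -/
def interpolationDomain (c : ℝ) (K : Measure ℝ) (R : ℝ) : Set ℝ :=
  {lam | lam * 2 ∈ interior (integrableExpSet id (kolmogorovMeasure c K)) ∧
    lam * (2 * R) ∈ interior (integrableExpSet id (kolmogorovMeasure c K))}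

lemma isOpen_interpolationDomain : IsOpen (interpolationDomain c K R) :=
  (isOpen_interior.preimage (continuous_mul_const 2)).inter
    (isOpen_interior.preimage (continuous_mul_const (2 * R)))

lemma Icc_subset_interpolationDomain
    (h0 : 0 ∈ interior (integrableExpSet id (kolmogorovMeasure c K)))
    (h2 : 2 ∈ interior (integrableExpSet id (kolmogorovMeasure c K)))
    (h2R : 2 * R ∈ interior (integrableExpSet id (kolmogorovMeasure c K))) :
    Icc 0 1 ⊆ interpolationDomain c K R := fun _ hlam =>
  ⟨convex_integrableExpSet.interior.smul_mem_of_zero_mem h0 h2 hlam,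
    convex_integrableExpSet.interior.smul_mem_of_zero_mem h0 h2R hlam⟩

variable [IsFiniteMeasure (kolmogorovMeasure c K)]

lemma hasPolyGrowthDerivs_kappa_zLine {U : Set ℝ} (hU : IsOpen U) (hc : 0 ≤ c)
    (hR : ∀ lam ∈ U, lam * R ∈ interior (integrableExpSet id (kolmogorovMeasure c K))) :
    HasPolyGrowthDerivs U n fun lam y => kappa μ c K lam (zLine R y) := by
  have hz : HasPolyGrowthDerivs U n fun _ => zLine R := .const polyGrowthOn_zLine
  have hμ : HasPolyGrowthDerivs U n fun _ (_ : ℝ) => (μ : ℂ) :=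
    .of_contDiffOn hU contDiffOn_const
  have hmono : interior (integrableExpSet id (kolmogorovMeasure c K)) ⊆ interior
      (integrableExpSet (fun p : ℝ × ℝ => p.1 * p.2) ((kolmogorovMeasure c K).prod taylorWeight)) :=
    interior_mono integrableExpSet_id_subset_prod_taylorWeight
  have hΦ : HasPolyGrowthDerivs U n fun lam y =>
      remainderTransform (kolmogorovMeasure c K) (lam * zLine R y) :=
    isStripBounded_complexMGF.hasPolyGrowthDerivs_comp_mul_zLine isOpen_interior
      fun lam hlam => hmono (hR lam hlam)
  refine ((hμ.mul hz).add ((hz.mul hz).mul hΦ)).congr hU fun lam hlam y => ?_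
  rw [kappa_eq_remainderTransform hc (by simpa [zLine_re] using interior_subset (hR lam hlam)), sq]

lemma contDiffOn_kappa {U : Set ℝ} (hU : IsOpen U) (hc : 0 ≤ c) {z : ℂ}
    (hz : ∀ lam ∈ U, lam * z.re ∈ interior (integrableExpSet id (kolmogorovMeasure c K))) :
    ContDiffOn ℝ n (fun lam => kappa μ c K lam z) U := by
  simpa [zLine] using (hasPolyGrowthDerivs_kappa_zLine hU hc hz).contDiffOn hU z.im

section

variable (hc : 0 ≤ c) (h0 : 0 ∈ interior (integrableExpSet id (kolmogorovMeasure c K)))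

include hc h0

lemma contDiffOn_kappa_one :
    ContDiffOn ℝ n (fun lam => kappa μ c K lam 1) (interpolationDomain c K R) :=
  contDiffOn_kappa isOpen_interpolationDomain hc fun _ hlam => mul_mem_of_two_mul_mem
    convex_integrableExpSet.interior h0 (by simpa using hlam.1)

lemma contDiffOn_kbar_one_one :
    ContDiffOn ℝ n (fun lam => kbar μ c K lam 1 1) (interpolationDomain c K R) := by
  have h1 := contDiffOn_kappa_one (μ := μ) (R := R) (n := n) hc h0
  refine ((contDiffOn_kappa isOpen_interpolationDomain hc fun _ hlam => ?_).sub h1).sub h1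
  simpa [one_add_one_eq_two] using hlam.1

lemma contDiffOn_LamMV [NeZero (kolmogorovMeasure c K)] :
    ContDiffOn ℝ n (LamMV μ c K) (interpolationDomain c K R) :=
  ((contDiffOn_kappa_one hc h0).mul <| (contDiffOn_kbar_one_one hc h0).inv fun _ hlam =>
    kbar_one_one_ne_zero hc (interior_subset hlam.1)).congr fun lam _ => by
      rw [LamMV_eq_div_kbar, div_eq_mul_inv, Pi.inv_apply]

lemma hasPolyGrowthDerivs_etaLK_zLine [NeZero (kolmogorovMeasure c K)] :
    HasPolyGrowthDerivs (interpolationDomain c K R) n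
      fun lam y => etaLK μ c K lam (zLine R y) := by
  have hU : IsOpen (interpolationDomain c K R) := isOpen_interpolationDomain
  have hκ : HasPolyGrowthDerivs (interpolationDomain c K R) n
      fun lam y => kappa μ c K lam (zLine R y) :=
    hasPolyGrowthDerivs_kappa_zLine hU hc fun lam hlam =>
      mul_mem_of_two_mul_mem convex_integrableExpSet.interior h0 hlam.2
  have hκ_shift : HasPolyGrowthDerivs (interpolationDomain c K R) n
      fun lam y => kappa μ c K lam (zLine (R + 1) y) :=
    hasPolyGrowthDerivs_kappa_zLine hU hc fun lam hlam =>
      mul_add_mem_of_two_mul_mem convex_integrableExpSet.interior hlam.2 (by simpa using hlam.1)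
  have hκ₁ := HasPolyGrowthDerivs.of_contDiffOn (E := ℝ) hU
    (contDiffOn_kappa_one (μ := μ) (n := n) hc h0)
  have hΛ := HasPolyGrowthDerivs.of_contDiffOn (E := ℝ) hU
    (contDiffOn_LamMV (μ := μ) (n := n) hc h0)
  refine (hκ.sub (hΛ.mul ((hκ_shift.sub hκ).sub hκ₁))).congr hU fun lam _ y => ?_
  rw [etaLK_eq_sub_LamMV_mul_kbar, kbar, zLine_add_one]

lemma isBoundedUnder_re_etaLK_zLine [NeZero (kolmogorovMeasure c K)] {lam : ℝ}
    (hlam : lam ∈ interpolationDomain c K R) :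
    IsBoundedUnder (· ≤ ·) (comap Prod.fst (𝓝 lam))
      fun p : ℝ × ℝ => (etaLK μ c K p.1 (zLine R p.2)).re := by
  have hU : IsOpen (interpolationDomain c K R) := isOpen_interpolationDomain
  have hκ : ContinuousOn (fun lam => kappa μ c K lam ((2 * R : ℝ) : ℂ))
      (interpolationDomain c K R) :=
    (contDiffOn_kappa (n := 0) hU hc fun lam hlam => by
      simpa only [ofReal_re] using hlam.2).continuousOn
  have hΛ := (contDiffOn_LamMV (μ := μ) (R := R) (n := 0) hc h0).continuousOn
  have hκbar := (contDiffOn_kbar_one_one (μ := μ) (R := R) (n := 0) hc h0).continuousOn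
  have hbound : ContinuousOn (fun lam => (kappa μ c K lam ((2 * R : ℝ) : ℂ)).re / 2 +
      ‖LamMV μ c K lam‖ ^ 2 * (kbar μ c K lam 1 1).re / 2) (interpolationDomain c K R) :=
    ((continuous_re.comp_continuousOn hκ).div_const 2).add
      (((hΛ.norm.pow 2).mul (continuous_re.comp_continuousOn hκbar)).div_const 2)
  obtain ⟨M, hM⟩ := (hbound.continuousAt (hU.mem_nhds hlam)).tendsto.isBoundedUnder_le
  refine ⟨M, eventually_map.mpr ?_⟩
  filter_upwards [tendsto_comap.eventually (eventually_map.mp hM),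
    tendsto_comap.eventually (hU.eventually_mem hlam)] with p hp hpU
  refine (re_etaLK_le hc (interior_subset hpU.1) ?_).trans ?_
  · simpa only [zLine_re] using interior_subset hpU.2
  · simpa only [zLine_re] using hp

lemma contDiffOn_integral_cexp_etaLK [NeZero (kolmogorovMeasure c K)] {τ : ℝ} (hτ : 0 ≤ τ)
    {w : ℝ → ℂ} (hwm : AEStronglyMeasurable w)
    (hw : ∀ N : ℕ, Integrable fun y => (1 + ‖y‖) ^ N * ‖w y‖) :
    ContDiffOn ℝ n (fun lam => ∫ y, cexp (etaLK μ c K lam (zLine R y) * τ) * w y)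
      (interpolationDomain c K R) := by
  have hU : IsOpen (interpolationDomain c K R) := isOpen_interpolationDomain
  have hητ := (hasPolyGrowthDerivs_etaLK_zLine (μ := μ) (R := R) (n := n) hc h0).mul
    (.of_contDiffOn (g := fun _ => (τ : ℂ)) hU contDiffOn_const)
  refine (hητ.exp fun lam hlam => ?_).contDiffOn_integral_mul hU hwm hw
  obtain ⟨M, hM⟩ := isBoundedUnder_re_etaLK_zLine (μ := μ) hc h0 hlam
  refine ⟨M * τ, eventually_map.mpr ((eventually_map.mp hM).mono fun p hp => ?_)⟩
  simpa only [uncurry, re_mul_ofReal] using mul_le_mul_of_nonneg_right hp hτ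

end

end Interpolation

section FourierDecay

variable {l : ℝ → ℝ} {n : ℕ}

lemma lhat_eq_fourier (l : ℝ → ℝ) (y : ℝ) :
    lhat l y = FourierTransform.fourier (fun x => (l x : ℂ)) (y / (2 * Real.pi)) := by
  rw [lhat, Real.fourier_real_eq_integral_exp_smul]
  refine integral_congr_ae (.of_forall fun x => ?_)
  have hπ : (Real.pi : ℂ) ≠ 0 := by exact_mod_cast Real.pi_ne_zero
  simp only [smul_eq_mul]
  rw [mul_comm]
  congr 2
  push_cast
  field_simp

lemma continuous_lhat (hl : Integrable l) : Continuous (lhat l) := by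
  have hcont := VectorFourier.fourierIntegral_continuous (e := Real.fourierChar) (μ := volume)
    (L := innerₗ ℝ) Real.continuous_fourierChar continuous_inner (hl.ofReal (𝕜 := ℂ))
  simp_rw [funext (lhat_eq_fourier l)]
  exact hcont.comp (continuous_id.div_const _)

lemma iteratedDeriv_ofReal_comp (hl : ContDiff ℝ n l) :
    iteratedDeriv n (fun x => (l x : ℂ)) = fun x => ((iteratedDeriv n l x : ℝ) : ℂ) := by
  ext x
  have h := ofRealCLM.iteratedFDeriv_comp_left (hl.contDiffAt (x := x)) le_rfl
  exact congrArg (fun M => M fun _ => 1) h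

lemma abs_pow_mul_norm_lhat_le (hl : ContDiff ℝ n l)
    (hint : ∀ m ≤ n, Integrable (iteratedDeriv m l)) (y : ℝ) :
    |y| ^ n * ‖lhat l y‖ ≤ ∫ x, ‖iteratedDeriv n l x‖ := by
  have hint' : ∀ m : ℕ, (m : ℕ∞) ≤ n → Integrable (iteratedDeriv m fun x => (l x : ℂ)) := by
    intro m hm
    have hmn : m ≤ n := by exact_mod_cast hm
    rw [iteratedDeriv_ofReal_comp (hl.of_le (by exact_mod_cast hmn))]
    exact (hint m hmn).ofReal
  have hfourier := congrFun (Real.fourier_iteratedDeriv (N := n) (ofRealCLM.contDiff.comp hl)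
    hint' le_rfl) (y / (2 * Real.pi))
  have hπ : (Real.pi : ℂ) ≠ 0 := by exact_mod_cast Real.pi_ne_zero
  have hfreq : 2 * (Real.pi : ℂ) * I * ((y / (2 * Real.pi) : ℝ) : ℂ) = I * y := by
    push_cast
    field_simp
  calc |y| ^ n * ‖lhat l y‖ = ‖(I * (y : ℂ)) ^ n • lhat l y‖ := by simp
    _ = ‖FourierTransform.fourier (iteratedDeriv n fun x => (l x : ℂ)) (y / (2 * Real.pi))‖ := by
        rw [lhat_eq_fourier, ← hfreq]
        exact congrArg _ hfourier.symm
    _ ≤ ∫ x, ‖iteratedDeriv n (fun x => (l x : ℂ)) x‖ :=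
        VectorFourier.norm_fourierIntegral_le_integral_norm _ _ _ _ _
    _ = ∫ x, ‖iteratedDeriv n l x‖ := by simp [iteratedDeriv_ofReal_comp hl]

lemma integrable_one_add_norm_pow_mul_norm {D E : Type*} [NormedAddCommGroup D]
    [MeasurableSpace D] [BorelSpace D] [SecondCountableTopology D] [NormedAddCommGroup E]
    {ν : Measure D} [ν.HasTemperateGrowth] {f : D → E} (hfm : AEStronglyMeasurable f ν)
    (hf : ∀ k : ℕ, ∃ C, ∀ x, ‖x‖ ^ k * ‖f x‖ ≤ C) (N : ℕ) :
    Integrable (fun x => (1 + ‖x‖) ^ N * ‖f x‖) ν := by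
  have hpow (k : ℕ) : Integrable (fun x => ‖x‖ ^ k * ‖f x‖) ν := by
    obtain ⟨C₀, hC₀⟩ := hf 0
    obtain ⟨C, hC⟩ := hf (k + ν.integrablePower)
    exact integrable_of_le_of_pow_mul_le (by simpa using hC₀) hC hfm
  simp_rw [add_comm (1 : ℝ), add_pow, Finset.sum_mul, one_pow, mul_one]
  exact integrable_finsetSum _ fun k _ =>
    ((hpow k).mul_const (N.choose k : ℝ)).congr (.of_forall fun x => by ring)

variable {R s : ℝ}

lemma norm_cpowR_zLine (R s y : ℝ) : ‖cpowR s (zLine R y)‖ = Real.exp (R * Real.log s) := by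
  rw [cpowR, norm_exp, re_mul_ofReal, zLine_re]

lemma continuous_cpowR_zLine_mul_pCoef (hl : Integrable l) :
    Continuous fun y => cpowR s (zLine R y) * pCoef l y := by
  have := continuous_lhat hl
  unfold cpowR zLine pCoef
  fun_prop

lemma integrable_one_add_norm_pow_mul_norm_cpowR_zLine_mul_pCoef (hl : ContDiff ℝ (⊤ : ℕ∞) l)
    (hint : ∀ m, Integrable (iteratedDeriv m l)) (N : ℕ) :
    Integrable fun y => (1 + ‖y‖) ^ N * ‖cpowR s (zLine R y) * pCoef l y‖ := by
  refine integrable_one_add_norm_pow_mul_norm (continuous_cpowR_zLine_mul_pCoef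
    (by simpa using hint 0)).aestronglyMeasurable (fun k => ?_) N
  refine ⟨Real.exp (R * Real.log s) / ‖(2 * Real.pi : ℂ)‖ * ∫ x, ‖iteratedDeriv k l x‖,
    fun y => ?_⟩
  have hdecay := abs_pow_mul_norm_lhat_le (hl.of_le (by exact_mod_cast le_top)) (n := k)
    (fun m _ => hint m) y
  calc ‖y‖ ^ k * ‖cpowR s (zLine R y) * pCoef l y‖
      = Real.exp (R * Real.log s) / ‖(2 * Real.pi : ℂ)‖ * (|y| ^ k * ‖lhat l y‖) := by
        rw [norm_mul, norm_cpowR_zLine, pCoef, norm_div, Real.norm_eq_abs]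
        ring
    _ ≤ _ := by gcongr

end FourierDecay

section InterpolatedPrice

variable {μ c : ℝ} {K : Measure ℝ} {R T u x : ℝ} {l : ℝ → ℝ} {n : ℕ}

/-- The price `H(λ; u, x)` at time `u` and spot `x` in the interpolated model, for the claim whose
damped log-payoff is `l`. -/
noncomputable def interpolatedPrice (μ c : ℝ) (K : Measure ℝ) (R T : ℝ) (l : ℝ → ℝ)
    (u x lam : ℝ) : ℂ :=
  ∫ y : ℝ, cpowR x (zLine R y) *
    cexp (etaLK μ c K lam (zLine R y) * ((T : ℂ) - (u : ℂ))) * pCoef l y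

lemma interpolatedPrice_zero (hσ : c + ∫ x : ℝ, x ^ 2 ∂K ≠ 0) :
    interpolatedPrice μ c K R T l u x 0 = cashGreek (c + ∫ x : ℝ, x ^ 2 ∂K) T R l 0 u x := by
  simp only [interpolatedPrice, cashGreek, etaLK_zero hσ, Finset.range_zero, Finset.prod_empty,
    one_mul]

lemma contDiff_comp_exp_mul_exp {f : ℝ → ℝ} {m : WithTop ℕ∞} (hf : ContDiffOn ℝ m f (Ioi 0))
    (a : ℝ) : ContDiff ℝ m fun x => f (Real.exp x) * Real.exp (a * x) :=
  (hf.comp_contDiff Real.contDiff_exp Real.exp_pos).mul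
    (Real.contDiff_exp.comp (contDiff_const.mul contDiff_id))

lemma contDiffOn_interpolatedPrice [IsFiniteMeasure (kolmogorovMeasure c K)]
    [NeZero (kolmogorovMeasure c K)] (hc : 0 ≤ c)
    (h0 : 0 ∈ interior (integrableExpSet id (kolmogorovMeasure c K)))
    (hl : ContDiff ℝ (⊤ : ℕ∞) l) (hint : ∀ m, Integrable (iteratedDeriv m l)) (hu : u ≤ T) :
    ContDiffOn ℝ n (interpolatedPrice μ c K R T l u x) (interpolationDomain c K R) := by
  refine (contDiffOn_integral_cexp_etaLK (μ := μ) hc h0 (sub_nonneg.mpr hu)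
    (continuous_cpowR_zLine_mul_pCoef (s := x) (R := R)
      (by simpa using hint 0)).aestronglyMeasurable
    (integrable_one_add_norm_pow_mul_norm_cpowR_zLine_mul_pCoef hl hint)).congr fun lam _ => ?_
  refine integral_congr_ae (.of_forall fun y => ?_)
  simp only [ofReal_sub]
  ring

end InterpolatedPrice

section ProductRule

variable {𝕜 𝔸 : Type*} [NontriviallyNormedField 𝕜] [NormedRing 𝔸] [NormedAlgebra 𝕜 𝔸]
  {f g : 𝕜 → 𝔸} {S : Set 𝕜} {x : 𝕜}

lemma iteratedDerivWithin_one_mul (hS : UniqueDiffOn 𝕜 S) (hx : x ∈ S)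
    (hf : ContDiffWithinAt 𝕜 1 f S x) (hg : ContDiffWithinAt 𝕜 1 g S x) :
    iteratedDerivWithin 1 (f * g) S x =
      iteratedDerivWithin 1 f S x * g x + f x * iteratedDerivWithin 1 g S x := by
  rw [iteratedDerivWithin_mul hx hS hf hg]
  simp [Finset.sum_range_succ, add_comm]

lemma iteratedDerivWithin_two_mul (hS : UniqueDiffOn 𝕜 S) (hx : x ∈ S)
    (hf : ContDiffWithinAt 𝕜 2 f S x) (hg : ContDiffWithinAt 𝕜 2 g S x) :
    iteratedDerivWithin 2 (f * g) S x = iteratedDerivWithin 2 f S x * g x +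
      2 * iteratedDerivWithin 1 f S x * iteratedDerivWithin 1 g S x +
      f x * iteratedDerivWithin 2 g S x := by
  rw [iteratedDerivWithin_mul hx hS hf hg]
  simp [Finset.sum_range_succ]
  abel

end ProductRule

section QuotientMulSubSub

variable {𝕜 𝕜' : Type*} [NontriviallyNormedField 𝕜] [NormedField 𝕜'] [NormedAlgebra 𝕜 𝕜']
  {L f g : 𝕜 → 𝕜'} {S : Set 𝕜} {x : 𝕜} {n : ℕ}

lemma iteratedDerivWithin_div_const_field (L : 𝕜 → 𝕜') (r : 𝕜') :
    iteratedDerivWithin n (fun x => L x / r) S x = iteratedDerivWithin n L S x / r := by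
  simp only [div_eq_mul_inv, iteratedDerivWithin_mul_const_field]

lemma iteratedDerivWithin_sub_sub_const {F : Type*} [NormedAddCommGroup F] [NormedSpace 𝕜 F]
    {f g : 𝕜 → F} (hS : UniqueDiffOn 𝕜 S) (hx : x ∈ S) (hn : n ≠ 0)
    (hf : ContDiffWithinAt 𝕜 n f S x) (hg : ContDiffWithinAt 𝕜 n g S x) (a : F) :
    iteratedDerivWithin n (fun x => f x - g x - a) S x =
      iteratedDerivWithin n f S x - iteratedDerivWithin n g S x := by
  have hfg : ContDiffWithinAt 𝕜 n (f - g) S x := hf.sub hg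
  rw [← iteratedDerivWithin_sub hx hS hf hg]
  refine (iteratedDerivWithin_sub hx hS hfg contDiffWithinAt_const).trans ?_
  rw [iteratedDerivWithin_const, if_neg hn, sub_zero]

lemma iteratedDerivWithin_one_div_mul_sub_sub (hS : UniqueDiffOn 𝕜 S) (hx : x ∈ S)
    (hL : ContDiffWithinAt 𝕜 1 L S x) (hf : ContDiffWithinAt 𝕜 1 f S x)
    (hg : ContDiffWithinAt 𝕜 1 g S x) (r a : 𝕜') :
    iteratedDerivWithin 1 (fun x => L x / r * (f x - g x - a)) S x =
      iteratedDerivWithin 1 L S x / r * (f x - g x - a) +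
        L x / r * (iteratedDerivWithin 1 f S x - iteratedDerivWithin 1 g S x) := by
  have h := iteratedDerivWithin_one_mul hS hx (hL.div_const r)
    ((hf.sub hg).sub (contDiffWithinAt_const (c := a)))
  rwa [iteratedDerivWithin_div_const_field,
    iteratedDerivWithin_sub_sub_const hS hx one_ne_zero hf hg] at h

lemma iteratedDerivWithin_two_div_mul_sub_sub (hS : UniqueDiffOn 𝕜 S) (hx : x ∈ S)
    (hL : ContDiffWithinAt 𝕜 2 L S x) (hf : ContDiffWithinAt 𝕜 2 f S x)
    (hg : ContDiffWithinAt 𝕜 2 g S x) (r a : 𝕜') :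
    iteratedDerivWithin 2 (fun x => L x / r * (f x - g x - a)) S x =
      iteratedDerivWithin 2 L S x / r * (f x - g x - a) +
        2 * (iteratedDerivWithin 1 L S x / r) *
          (iteratedDerivWithin 1 f S x - iteratedDerivWithin 1 g S x) +
        L x / r * (iteratedDerivWithin 2 f S x - iteratedDerivWithin 2 g S x) := by
  have h := iteratedDerivWithin_two_mul hS hx (hL.div_const r)
    ((hf.sub hg).sub (contDiffWithinAt_const (c := a)))
  rwa [iteratedDerivWithin_div_const_field, iteratedDerivWithin_div_const_field,
    iteratedDerivWithin_sub_sub_const hS hx one_ne_zero (hf.of_le one_le_two)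
      (hg.of_le one_le_two),
    iteratedDerivWithin_sub_sub_const hS hx two_ne_zero hf hg] at h

end QuotientMulSubSub

end

/-- second-order expansion of the feedback part `χ(t,s,g)` of the
variance-optimal hedge ratio (Theorem `ApproxRatioVoHedge`). -/
theorem feedback_term_expansion
    (μ c : ℝ) (hc : 0 ≤ c) (K : MeasureTheory.Measure ℝ)
    (hK0 : K {0} = 0)
    (hKmin : ∫⁻ x : ℝ, ENNReal.ofReal (min 1 (x ^ 2)) ∂K ≠ ⊤)
    (R : ℝ) (hR : R ≠ 0) (a b : ℝ)
    (h0 : (0 : ℝ) ∈ Set.Ioo a b) (h2 : (2 : ℝ) ∈ Set.Ioo a b)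
    (h2R : 2 * R ∈ Set.Ioo a b)
    (hK5 : ∫⁻ x in {x : ℝ | 1 ≤ |x|}, ENNReal.ofReal (|x| ^ 5) ∂K ≠ ⊤)
    (hKexp : ∀ s ∈ Set.Ioo a b,
      ∫⁻ x in {x : ℝ | 1 ≤ |x|}, ENNReal.ofReal (Real.exp (s * x)) ∂K ≠ ⊤)
    (σ2 : ℝ) (hσ2 : σ2 = c + ∫ x : ℝ, x ^ 2 ∂K) (hσ2pos : 0 < σ2)
    (f : ℝ → ℝ) (hf : ContDiffOn ℝ (⊤ : ℕ∞) f (Set.Ioi 0))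
    (l : ℝ → ℝ) (hl : l = fun x => f (Real.exp x) * Real.exp (-R * x))
    (hlint : ∀ n : ℕ, Integrable (iteratedDeriv n l))
    (T t s S₀ g : ℝ) (hT : 0 < T) (ht : t ∈ Set.Ico 0 T) (hs : 0 < s) (hS₀ : 0 < S₀)
    (Hf : ℝ → ℝ → ℝ → ℂ)
    (hHf : ∀ (u x lam : ℝ), Hf u x lam =
      ∫ y : ℝ, cpowR x (zLine R y) *
        Complex.exp (etaLK μ c K lam (zLine R y) * ((T : ℂ) - (u : ℂ))) * pCoef l y)
    (χ : ℝ → ℂ)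
    (hχ : ∀ lam : ℝ, χ lam =
      LamMV μ c K lam / (s : ℂ) * (Hf t s lam - Hf 0 S₀ lam - (g : ℂ))) :
    ContDiffOn ℝ 2 χ (Set.Icc 0 1) ∧
    χ 0 = LamMV μ c K 0 / (s : ℂ) *
      (cashGreek σ2 T R l 0 t s - cashGreek σ2 T R l 0 0 S₀ - (g : ℂ)) ∧
    iteratedDerivWithin 1 χ (Set.Icc 0 1) 0 =
      iteratedDerivWithin 1 (LamMV μ c K) (Set.Icc 0 1) 0 / (s : ℂ) *
          (cashGreek σ2 T R l 0 t s - cashGreek σ2 T R l 0 0 S₀ - (g : ℂ)) +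
        LamMV μ c K 0 / (s : ℂ) *
          (iteratedDerivWithin 1 (Hf t s) (Set.Icc 0 1) 0 -
            iteratedDerivWithin 1 (Hf 0 S₀) (Set.Icc 0 1) 0) ∧
    iteratedDerivWithin 2 χ (Set.Icc 0 1) 0 =
      iteratedDerivWithin 2 (LamMV μ c K) (Set.Icc 0 1) 0 / (s : ℂ) *
          (cashGreek σ2 T R l 0 t s - cashGreek σ2 T R l 0 0 S₀ - (g : ℂ)) +
        2 * (iteratedDerivWithin 1 (LamMV μ c K) (Set.Icc 0 1) 0 / (s : ℂ)) *
          (iteratedDerivWithin 1 (Hf t s) (Set.Icc 0 1) 0 -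
            iteratedDerivWithin 1 (Hf 0 S₀) (Set.Icc 0 1) 0) +
        LamMV μ c K 0 / (s : ℂ) *
          (iteratedDerivWithin 2 (Hf t s) (Set.Icc 0 1) 0 -
            iteratedDerivWithin 2 (Hf 0 S₀) (Set.Icc 0 1) 0) := by
  subst hσ2 hl
  obtain rfl : Hf = interpolatedPrice μ c K R T _ := funext₃ hHf
  obtain rfl : χ = _ := funext hχ
  have hD := subset_interior_integrableExpSet_of_lintegral_ne_top isOpen_Ioo c hKmin hKexp
  have := isFiniteMeasure_of_zero_mem_integrableExpSet (interior_subset (hD h0))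
  have := neZero_kolmogorovMeasure hc hσ2pos.ne'
  have hdom : Icc 0 1 ⊆ interpolationDomain c K R :=
    Icc_subset_interpolationDomain (hD h0) (hD h2) (hD h2R)
  have hΛ : ContDiffOn ℝ 2 (LamMV μ c K) (Icc 0 1) :=
    (contDiffOn_LamMV (n := 2) hc (hD h0)).mono hdom
  have hH {u x : ℝ} (hu : u ≤ T) : ContDiffOn ℝ 2 (interpolatedPrice μ c K R T _ u x) (Icc 0 1) :=
    (contDiffOn_interpolatedPrice (n := 2) hc (hD h0) (contDiff_comp_exp_mul_exp hf _) hlint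
      hu).mono hdom
  have hI : UniqueDiffOn ℝ (Icc (0 : ℝ) 1) := uniqueDiffOn_Icc_zero_one
  have h0I : (0 : ℝ) ∈ Icc (0 : ℝ) 1 := left_mem_Icc.mpr zero_le_one
  have hΛ0 := hΛ 0 h0I
  have hHt := hH (x := s) ht.2.le 0 h0I
  have hH0 := hH (x := S₀) hT.le 0 h0I
  rw [← interpolatedPrice_zero (μ := μ) hσ2pos.ne', ← interpolatedPrice_zero (μ := μ) hσ2pos.ne']
  exact ⟨(hΛ.div_const _).mul (((hH ht.2.le).sub (hH hT.le)).sub contDiffOn_const), rfl,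
    iteratedDerivWithin_one_div_mul_sub_sub hI h0I (hΛ0.of_le one_le_two)
      (hHt.of_le one_le_two) (hH0.of_le one_le_two) _ _,
    iteratedDerivWithin_two_div_mul_sub_sub hI h0I hΛ0 hHt hH0 _ _⟩
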